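/- arXiv:math/0308257 — 3 statements merged into one kernel-verified Lean document; each statement's English description precedes it below -/
import Mathlib

section
/- Let S be a unital inverse semigroup and let φ : S → ℂ be a restricted positive definite function of finite support. Define ρ̃_r(φ) on functions ξ : S → ℂ by (ρ̃_r(φ)ξ)(y) = ∑_{z : z z⋆ = y⋆ y} φ(z) · ξ(y z). Then for every finitely supported ξ : S → ℂ, the inner product ⟨ρ̃_r(φ)ξ, ξ⟩ = ∑_{y ∈ S} (ρ̃_r(φ)ξ)(y) · conj(ξ(y)) is a nonnegative real number. (Lemma 2.4) -/
open scoped Classical ComplexOrder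

noncomputable section

/-- A unital inverse semigroup: a monoid with an involution `star` satisfying
`star (x*y) = star y * star x`, `star (star x) = x`, `x * star x * x = x`,
`star x * x * star x = star x`, in which all idempotents commute. -/
class InverseSemigroup (S : Type*) extends Monoid S, StarMul S where
  mul_star_mul_self : ∀ x : S, x * star x * x = x
  star_mul_self_star : ∀ x : S, star x * x * star x = star x
  idem_comm : ∀ e f : S, e * e = e → f * f = f → e * f = f * e

variable {S : Type*} [InverseSemigroup S]

/-- The restricted left translate `λ_r(x)u`. -/
def restrictedTranslate (x : S) (u : S → ℂ) : S → ℂ := fun y =>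
  if x * star x = y * star y then u (star x * y) else 0

/-- `u` is restricted positive definite. -/
def IsRestrictedPosDef (u : S → ℂ) : Prop :=
  (∃ M : ℝ, ∀ x, ‖u x‖ ≤ M) ∧
  ∀ (n : ℕ) (x : Fin n → S) (c : Fin n → ℂ),
    0 ≤ ∑ i, ∑ j, (starRingEnd ℂ) (c i) * c j * restrictedTranslate (x i) u (x j)

/-- `u` is extendible restricted positive definite. -/
def IsExtendibleRPD (u : S → ℂ) : Prop :=
  IsRestrictedPosDef u ∧ (∀ x, u (star x) = (starRingEnd ℂ) (u x)) ∧
  ∃ C : ℝ, 0 < C ∧ ∀ (n : ℕ) (x : Fin n → S) (c : Fin n → ℂ),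
    ((‖∑ i, c i * u (x i)‖ ^ 2 : ℝ) : ℂ) ≤
      (C : ℂ) * ∑ i, ∑ j, (starRingEnd ℂ) (c i) * c j * restrictedTranslate (x i) u (x j)

/-- The restricted convolution `ξ • η`. -/
def rconv (ξ η : S → ℂ) : S → ℂ := fun x =>
  ∑' y, if star x * x = y * star y then ξ (x * y) * η (star y) else 0

/-- `ξ̃(x) = conj (ξ (star x))`. -/
def tilde (ξ : S → ℂ) : S → ℂ := fun x => (starRingEnd ℂ) (ξ (star x))

/-- Multiplication of the restricted semigroup `S_r = Option S`. -/
def rmul : Option S → Option S → Option S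
  | some x, some y => if star x * x = y * star y then some (x * y) else none
  | _, _ => none

/-- Involution of the restricted semigroup `S_r = Option S`. -/
def rstar : Option S → Option S
  | some x => some (star x)
  | none => none


/-- The operator `ρ̃_r(φ)`, `(ρ̃_r(φ)ξ)(y) = ∑_{z : z z⋆ = y⋆ y} φ(z) ξ(y z)`. -/
def rhoTilde (φ ξ : S → ℂ) : S → ℂ := fun y =>
  ∑' z : S, if z * star z = star y * y then φ z * ξ (y * z) else 0

namespace InverseSemigroup

theorem mul_star_mul_of_range_eq {S : Type*} [InverseSemigroup S] {y w : S}
    (h : y * star y = w * star w) : y * (star y * w) = w := by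
  rw [← mul_assoc, h, mul_star_mul_self]

theorem range_star_mul_of_range_eq {S : Type*} [InverseSemigroup S] {y w : S}
    (h : y * star y = w * star w) : star y * w * star (star y * w) = star y * y := by
  rw [star_mul, star_star, mul_assoc, ← mul_assoc w, ← h, mul_star_mul_self]

theorem range_mul_of_range_eq_source {S : Type*} [InverseSemigroup S] {y z : S}
    (h : z * star z = star y * y) : y * star y = y * z * star (y * z) := by
  rw [star_mul, mul_assoc, ← mul_assoc z, h, star_mul_self_star]

theorem star_mul_mul_of_range_eq_source {S : Type*} [InverseSemigroup S] {y z : S}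
    (h : z * star z = star y * y) : star y * (y * z) = z := by
  rw [← mul_assoc, ← h, mul_star_mul_self]

end InverseSemigroup

open InverseSemigroup in
/-- The substitution `w = y * z` turns `ρ̃_r(φ)` into the integral operator with kernel
`(y, w) ↦ (λ_r(y)φ)(w)`. -/
theorem rhoTilde_eq_tsum_restrictedTranslate {S : Type*} [InverseSemigroup S] (φ ξ : S → ℂ)
    (y : S) : rhoTilde φ ξ y = ∑' w : S, ξ w * restrictedTranslate y φ w := by
  have range_eq (w : Function.support fun w => ξ w * restrictedTranslate y φ w) :
      y * star y = w.1 * star w.1 := by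
    by_contra h
    exact w.2 (by simp [restrictedTranslate, h])
  refine tsum_eq_tsum_of_ne_zero_bij (fun w => star y * w.1) ?_ ?_ ?_
  · intro v w hvw
    rw [Subtype.ext_iff, ← mul_star_mul_of_range_eq (range_eq v),
      ← mul_star_mul_of_range_eq (range_eq w)]
    exact congrArg (y * ·) hvw
  · intro z hz
    have h : z * star z = star y * y := by
      by_contra h
      exact hz (if_neg h)
    refine ⟨⟨y * z, ?_⟩, star_mul_mul_of_range_eq_source h⟩
    rw [Function.mem_support, if_pos h] at hz
    rwa [Function.mem_support, restrictedTranslate, if_pos (range_mul_of_range_eq_source h),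
      star_mul_mul_of_range_eq_source h, mul_comm]
  · intro w
    have h := range_eq w
    rw [if_pos (range_star_mul_of_range_eq h), mul_star_mul_of_range_eq h,
      restrictedTranslate, if_pos h, mul_comm]

/-- The positivity condition of `IsRestrictedPosDef`, indexed by a finite set of points. -/
theorem IsRestrictedPosDef.sum_finset_nonneg {S : Type*} [InverseSemigroup S] {u : S → ℂ}
    (hu : IsRestrictedPosDef u) (s : Finset S) (c : S → ℂ) :
    0 ≤ ∑ x ∈ s, ∑ y ∈ s, (starRingEnd ℂ) (c x) * c y * restrictedTranslate x u y := by
  have h := hu.2 s.card (fun i => s.equivFin.symm i) (fun i => c (s.equivFin.symm i))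
  have reindex (f : S → ℂ) : ∑ i, f (s.equivFin.symm i) = ∑ x ∈ s, f x := by
    rw [Equiv.sum_comp s.equivFin.symm (fun x : s => f x), Finset.sum_coe_sort]
  simp only [← reindex]
  exact h

/-- Lemma 2.4: if `φ` is restricted positive definite of finite support, then
`⟨ρ̃_r(φ)ξ, ξ⟩ ≥ 0` for every finitely supported `ξ`. -/
theorem rhoTilde_posDef {S : Type*} [InverseSemigroup S] (φ : S → ℂ)
    (hφ : IsRestrictedPosDef φ) (hφf : (Function.support φ).Finite)
    (ξ : S → ℂ) (hξ : (Function.support ξ).Finite) :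
    0 ≤ ∑' y : S, rhoTilde φ ξ y * (starRingEnd ℂ) (ξ y) := by
  have outside {y : S} (hy : y ∉ hξ.toFinset) : ξ y = 0 := by simpa using hy
  rw [tsum_eq_sum (s := hξ.toFinset) fun y hy => by simp [outside hy]]
  convert hφ.sum_finset_nonneg hξ.toFinset ξ using 2 with y
  rw [rhoTilde_eq_tsum_restrictedTranslate,
    tsum_eq_sum (s := hξ.toFinset) fun w hw => by simp [outside hw], Finset.sum_mul]
  exact Finset.sum_congr rfl fun w _ => by ring
end
end

section
/- Let S be a unital inverse semigroup and ξ ∈ ℓ²(S). Then the function φ = ξ • ξ̃, i.e. φ(x) = ∑_{y : x⋆ x = y y⋆} ξ(x y) · conj(ξ(y)), is an extendible restricted positive definite function on S. (Theorem 2.1, (ii) ⇒ (i)) -/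
open scoped Classical ComplexOrder

noncomputable section

variable {S : Type*} [InverseSemigroup S]

/-- Left multiplication by `x` maps the elements with range idempotent `star x * x` bijectively
onto those with range idempotent `x * star x`. -/
def mulLeftEquiv (x : S) :
    {y : S // star x * x = y * star y} ≃ {z : S // x * star x = z * star z} where
  toFun y := ⟨x * y, by
    rw [star_mul, mul_assoc x, ← mul_assoc y.1, ← y.2, InverseSemigroup.star_mul_self_star]⟩
  invFun z := ⟨star x * z, by
    rw [star_mul, star_star, mul_assoc (star x), ← mul_assoc z.1, ← z.2,
      InverseSemigroup.mul_star_mul_self]⟩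
  left_inv y := Subtype.ext <| by
    obtain ⟨y, hy⟩ := y
    change star x * (x * y) = y
    rw [← mul_assoc, hy, InverseSemigroup.mul_star_mul_self]
  right_inv z := Subtype.ext <| by
    obtain ⟨z, hz⟩ := z
    change x * (star x * z) = z
    rw [← mul_assoc, hz, InverseSemigroup.mul_star_mul_self]

lemma tsum_ite_mul_left (x : S) (g : S → S → ℂ) :
    (∑' y, if star x * x = y * star y then g (x * y) y else 0) =
      ∑' z, if x * star x = z * star z then g z (star x * z) else 0 := by
  have h₁ := tsum_subtype {y : S | star x * x = y * star y} fun y => g (x * y) y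
  have h₂ := tsum_subtype {z : S | x * star x = z * star z} fun z => g z (star x * z)
  simp only [Set.indicator_apply, Set.mem_ofPred_eq] at h₁ h₂
  rw [← h₁, ← h₂]
  refine Eq.trans (tsum_congr fun y => ?_) ((mulLeftEquiv x).tsum_eq
    fun z => g z.1 (star x * z.1))
  have hy : star x * (x * y.1) = y.1 :=
    congrArg Subtype.val ((mulLeftEquiv x).symm_apply_apply y)
  change g (x * y.1) y.1 = g (x * y.1) (star x * (x * y.1))
  rw [hy]

lemma sum_norm_sq_restrictedTranslate_le (x : S) {ξ : S → ℂ} (hξ : Summable fun y => ‖ξ y‖ ^ 2)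
    (s : Finset S) : ∑ z ∈ s, ‖restrictedTranslate x ξ z‖ ^ 2 ≤ ∑' y, ‖ξ y‖ ^ 2 := by
  have hz (z : S) : ‖restrictedTranslate x ξ z‖ ^ 2 =
      if x * star x = z * star z then ‖ξ (star x * z)‖ ^ 2 else 0 := by
    unfold restrictedTranslate
    split_ifs <;> simp
  have hinj : Set.InjOn (fun z => star x * z)
      (s.filter fun z => x * star x = z * star z) := by
    intro z hz w hw h
    simp only [Finset.coe_filter, Set.mem_ofPred_eq] at hz hw
    exact congrArg Subtype.val
      ((mulLeftEquiv x).symm.injective (a₁ := ⟨z, hz.2⟩) (a₂ := ⟨w, hw.2⟩) (Subtype.ext h))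
  simp_rw [hz]
  rw [← Finset.sum_filter, ← Finset.sum_image (f := fun y => ‖ξ y‖ ^ 2) hinj]
  exact hξ.sum_le_tsum _ fun _ _ => by positivity

lemma summable_norm_sq_restrictedTranslate (x : S) {ξ : S → ℂ}
    (hξ : Summable fun y => ‖ξ y‖ ^ 2) : Summable fun z => ‖restrictedTranslate x ξ z‖ ^ 2 :=
  summable_of_sum_le (fun _ => by positivity) (sum_norm_sq_restrictedTranslate_le x hξ)

lemma memℓp_two_iff {α : Type*} {f : α → ℂ} : Memℓp f 2 ↔ Summable fun y => ‖f y‖ ^ 2 := by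
  rw [memℓp_gen_iff (by simp)]
  simp

/-- The restricted left translation of `ℓ²(S)`. -/
def lpTranslate (x : S) (ξ : lp (fun _ : S => ℂ) 2) : lp (fun _ : S => ℂ) 2 :=
  ⟨restrictedTranslate x ξ, memℓp_two_iff.2 <|
    summable_norm_sq_restrictedTranslate x (memℓp_two_iff.1 ξ.2)⟩

lemma norm_lpTranslate_le (x : S) (ξ : lp (fun _ : S => ℂ) 2) : ‖lpTranslate x ξ‖ ≤ ‖ξ‖ := by
  refine lp.norm_le_of_forall_sum_le (by simp) (norm_nonneg _) fun s => ?_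
  rw [lp.norm_rpow_eq_tsum (by simp)]
  simpa [lpTranslate] using sum_norm_sq_restrictedTranslate_le x (memℓp_two_iff.1 ξ.2) s

lemma rconv_tilde_self_eq_inner (ξ : lp (fun _ : S => ℂ) 2) (x : S) :
    rconv ξ (tilde ξ) x = inner ℂ (lpTranslate x ξ) ξ := by
  rw [lp.inner_eq_tsum]
  unfold rconv
  simp only [tilde, star_star]
  rw [tsum_ite_mul_left x fun z y => ξ z * (starRingEnd ℂ) (ξ y)]
  refine tsum_congr fun z => ?_
  simp only [lpTranslate, restrictedTranslate]
  split_ifs <;> simp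

lemma rconv_tilde_self_star_eq_inner (ξ : lp (fun _ : S => ℂ) 2) (x : S) :
    rconv ξ (tilde ξ) (star x) = inner ℂ ξ (lpTranslate x ξ) := by
  rw [lp.inner_eq_tsum]
  unfold rconv
  refine tsum_congr fun z => ?_
  simp only [lpTranslate, restrictedTranslate, tilde, star_star]
  split_ifs <;> simp

lemma restrictedTranslate_rconv_tilde_self (ξ : lp (fun _ : S => ℂ) 2) (x y : S) :
    restrictedTranslate x (rconv ξ (tilde ξ)) y =
      inner ℂ (lpTranslate y ξ) (lpTranslate x ξ) := by
  rw [lp.inner_eq_tsum]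
  by_cases h : x * star x = y * star y
  · have hy : star (star x * y) * (star x * y) = star y * y := by
      rw [star_mul, star_star, mul_assoc, ← mul_assoc x, h,
        InverseSemigroup.mul_star_mul_self]
    simp only [restrictedTranslate, if_pos h, rconv, tilde, star_star, hy, mul_assoc (star x)]
    rw [tsum_ite_mul_left y fun z w => ξ (star x * z) * (starRingEnd ℂ) (ξ w)]
    refine tsum_congr fun z => ?_
    simp only [lpTranslate, restrictedTranslate, h]
    split_ifs <;> simp
  · rw [restrictedTranslate, if_neg h, eq_comm]
    refine (tsum_congr fun z => ?_).trans tsum_zero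
    simp only [lpTranslate, restrictedTranslate]
    by_cases hx : x * star x = z * star z
    · have hy : ¬ y * star y = z * star z := fun hy => h (hx.trans hy.symm)
      simp [hy]
    · simp [hx]

lemma sum_restrictedTranslate_rconv_tilde_self (ξ : lp (fun _ : S => ℂ) 2) {n : ℕ}
    (x : Fin n → S) (c : Fin n → ℂ) :
    ∑ i, ∑ j, (starRingEnd ℂ) (c i) * c j *
        restrictedTranslate (x i) (rconv ξ (tilde ξ)) (x j) =
      ((‖∑ i, (starRingEnd ℂ) (c i) • lpTranslate (x i) ξ‖ ^ 2 : ℝ) : ℂ) := by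
  refine Eq.trans ?_ ((inner_self_eq_norm_sq_to_K (𝕜 := ℂ)
    (∑ i, (starRingEnd ℂ) (c i) • lpTranslate (x i) ξ)).trans (by simp))
  simp only [restrictedTranslate_rconv_tilde_self, sum_inner, inner_sum, inner_smul_left,
    inner_smul_right, Complex.conj_conj, Finset.mul_sum, mul_assoc]

/-- Theorem 2.1, (ii) ⇒ (i): for `ξ ∈ ℓ²(S)`, the function `ξ • ξ̃` is an extendible
restricted positive definite function on `S`. -/
theorem rconv_tilde_self_extendibleRPD {S : Type*} [InverseSemigroup S]
    (ξ : S → ℂ) (hξ : Memℓp ξ 2) :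
    IsExtendibleRPD (rconv ξ (tilde ξ)) := by
  obtain ⟨ξ, rfl⟩ : ∃ f : lp (fun _ : S => ℂ) 2, ⇑f = ξ := ⟨⟨ξ, hξ⟩, rfl⟩
  refine ⟨⟨⟨‖ξ‖ * ‖ξ‖, fun x => ?_⟩, fun n x c => ?_⟩, fun x => ?_,
    ‖ξ‖ ^ 2 + 1, by positivity, fun n x c => ?_⟩
  · rw [rconv_tilde_self_eq_inner]
    exact (norm_inner_le_norm _ _).trans
      (mul_le_mul_of_nonneg_right (norm_lpTranslate_le x ξ) (norm_nonneg _))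
  · rw [sum_restrictedTranslate_rconv_tilde_self]
    exact Complex.zero_le_real.2 (by positivity)
  · rw [rconv_tilde_self_star_eq_inner, rconv_tilde_self_eq_inner, inner_conj_symm]
  · rw [sum_restrictedTranslate_rconv_tilde_self, ← Complex.ofReal_mul, Complex.real_le_real]
    have hsum : ∑ i, c i * rconv ξ (tilde ξ) (x i) =
        inner ℂ (∑ i, (starRingEnd ℂ) (c i) • lpTranslate (x i) ξ) ξ := by
      simp only [rconv_tilde_self_eq_inner, sum_inner, inner_smul_left, Complex.conj_conj]
    rw [hsum]
    have hle := pow_le_pow_left₀ (norm_nonneg _) (norm_inner_le_norm (𝕜 := ℂ)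
      (∑ i, (starRingEnd ℂ) (c i) • lpTranslate (x i) ξ) ξ) 2
    rw [mul_pow] at hle
    nlinarith [sq_nonneg ‖∑ i, (starRingEnd ℂ) (c i) • lpTranslate (x i) ξ‖]
end
end

section
/- Let S be a unital inverse semigroup. For x ∈ S define λ_r(x) on functions ξ : S → ℂ by (λ_r(x)ξ)(y) = ξ(x⋆ y) if x x⋆ = y y⋆ and 0 otherwise. Then λ_r(x) maps ℓ²(S) into ℓ²(S) with ‖λ_r(x)ξ‖₂ ≤ ‖ξ‖₂, the adjoint of λ_r(x) on ℓ²(S) is λ_r(x⋆), and for all x, y ∈ S: λ_r(x) ∘ λ_r(y) = λ_r(x y) if x⋆ x = y y⋆, while λ_r(x) ∘ λ_r(y) = 0 otherwise. (The restricted left regular representation λ_r ∈ Σ_r(S)) -/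
open scoped Classical ComplexOrder

noncomputable section

variable {S : Type*} [InverseSemigroup S]

theorem memℓp_two_iff_summable_norm_sq {α : Type*} (ξ : α → ℂ) :
    Memℓp ξ 2 ↔ Summable fun y => ‖ξ y‖ ^ 2 := by
  simpa using memℓp_gen_iff (p := 2) (f := ξ) (by norm_num)

namespace InverseSemigroup

theorem mul_mul_star_mul_eq {x w : S} (h : star x * x = w * star w) :
    x * w * star (x * w) = x * star x := by
  rw [star_mul, mul_assoc, ← mul_assoc w, ← h, ← mul_assoc, ← mul_assoc, mul_star_mul_self]

theorem star_mul_mul_star_star_mul_eq {x z : S} (h : x * star x = z * star z) :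
    star x * z * star (star x * z) = star x * x := by
  simpa using mul_mul_star_mul_eq (x := star x) (w := z) (by simpa using h)

theorem mul_star_mul_of_eq {x z : S} (h : x * star x = z * star z) : x * (star x * z) = z := by
  rw [← mul_assoc, h, mul_star_mul_self]

theorem star_mul_mul_of_eq {x w : S} (h : star x * x = w * star w) : star x * (x * w) = w := by
  rw [← mul_assoc, h, mul_star_mul_self]

/-- Left multiplication by `star x`, as a bijection from the elements with range projection
`x * star x` onto those with range projection `star x * x`. -/
def starMulLeftEquiv (x : S) :
    {z : S | x * star x = z * star z} ≃ {w : S | star x * x = w * star w} where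
  toFun z := ⟨star x * z, (star_mul_mul_star_star_mul_eq z.2).symm⟩
  invFun w := ⟨x * w, (mul_mul_star_mul_eq w.2).symm⟩
  left_inv z := Subtype.ext (mul_star_mul_of_eq z.2)
  right_inv w := Subtype.ext (star_mul_mul_of_eq w.2)

theorem starMulLeftEquiv_val_injective (x : S) :
    Function.Injective fun z : {z : S | x * star x = z * star z} => star x * (z : S) :=
  Subtype.val_injective.comp (starMulLeftEquiv x).injective

end InverseSemigroup

namespace restrictedTranslate

open InverseSemigroup

theorem norm_sq_eq_indicator (x : S) (ξ : S → ℂ) :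
    (fun y => ‖restrictedTranslate x ξ y‖ ^ 2) =
      {z : S | x * star x = z * star z}.indicator fun z => ‖ξ (star x * z)‖ ^ 2 := by
  ext y
  by_cases h : x * star x = y * star y <;> simp [restrictedTranslate, h]

theorem summable_norm_sq {x : S} {ξ : S → ℂ} (hξ : Summable fun y => ‖ξ y‖ ^ 2) :
    Summable fun y => ‖restrictedTranslate x ξ y‖ ^ 2 := by
  rw [norm_sq_eq_indicator, ← summable_subtype_iff_indicator]
  exact hξ.comp_injective (starMulLeftEquiv_val_injective x)

theorem tsum_norm_sq_le {x : S} {ξ : S → ℂ} (hξ : Summable fun y => ‖ξ y‖ ^ 2) :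
    ∑' y, ‖restrictedTranslate x ξ y‖ ^ 2 ≤ ∑' y, ‖ξ y‖ ^ 2 := by
  rw [norm_sq_eq_indicator, ← tsum_subtype]
  exact tsum_comp_le_tsum_of_inj hξ (fun _ => by positivity) (starMulLeftEquiv_val_injective x)

theorem tsum_mul_conj (x : S) (ξ η : S → ℂ) :
    ∑' y, restrictedTranslate x ξ y * (starRingEnd ℂ) (η y) =
      ∑' y, ξ y * (starRingEnd ℂ) (restrictedTranslate (star x) η y) := by
  have hl : (fun y => restrictedTranslate x ξ y * (starRingEnd ℂ) (η y)) =
      {z : S | x * star x = z * star z}.indicator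
        fun z => ξ (star x * z) * (starRingEnd ℂ) (η z) := by
    ext y
    by_cases h : x * star x = y * star y <;> simp [restrictedTranslate, h]
  have hr : (fun y => ξ y * (starRingEnd ℂ) (restrictedTranslate (star x) η y)) =
      {w : S | star x * x = w * star w}.indicator
        fun w => ξ w * (starRingEnd ℂ) (η (x * w)) := by
    ext y
    by_cases h : star x * x = y * star y <;> simp [restrictedTranslate, h]
  rw [hl, hr, ← tsum_subtype, ← tsum_subtype,
    ← Equiv.tsum_eq (starMulLeftEquiv x)]
  refine tsum_congr fun z => ?_
  simp only [starMulLeftEquiv, Equiv.coe_fn_mk, mul_star_mul_of_eq z.2]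

theorem comp_of_eq {x y : S} (h : star x * x = y * star y) (ξ : S → ℂ) :
    restrictedTranslate x (restrictedTranslate y ξ) = restrictedTranslate (x * y) ξ := by
  ext z
  simp only [restrictedTranslate, mul_mul_star_mul_eq h]
  split_ifs with hz hy
  · rw [star_mul, mul_assoc]
  · exact absurd (h.symm.trans (star_mul_mul_star_star_mul_eq hz).symm) hy
  · rfl

theorem comp_of_ne {x y : S} (h : star x * x ≠ y * star y) (ξ : S → ℂ) :
    restrictedTranslate x (restrictedTranslate y ξ) = 0 := by
  ext z
  simp only [restrictedTranslate, Pi.zero_apply]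
  split_ifs with hz hy
  · exact absurd ((star_mul_mul_star_star_mul_eq hz).symm.trans hy.symm) h
  · rfl
  · rfl

end restrictedTranslate

/-- The restricted left regular representation `λ_r` is a restricted representation of `S`
on `ℓ²(S)` with `‖λ_r(x)‖ ≤ 1`: each `λ_r(x)` maps `ℓ²(S)` into `ℓ²(S)` contractively,
its adjoint is `λ_r(x⋆)`, and `λ_r(x)λ_r(y) = λ_r(xy)` if `x⋆ x = y y⋆`, `= 0` otherwise. -/
theorem restrictedLeftRegular_is_restricted_rep {S : Type*} [InverseSemigroup S] :
    (∀ (x : S) (ξ : S → ℂ), Memℓp ξ 2 →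
        Memℓp (restrictedTranslate x ξ) 2 ∧
        Real.sqrt (∑' y : S, ‖restrictedTranslate x ξ y‖ ^ 2)
          ≤ Real.sqrt (∑' y : S, ‖ξ y‖ ^ 2)) ∧
    (∀ (x : S) (ξ η : S → ℂ), Memℓp ξ 2 → Memℓp η 2 →
        ∑' y : S, restrictedTranslate x ξ y * (starRingEnd ℂ) (η y)
          = ∑' y : S, ξ y * (starRingEnd ℂ) (restrictedTranslate (star x) η y)) ∧
    (∀ x y : S,
        (star x * x = y * star y →
          ∀ ξ : S → ℂ, Memℓp ξ 2 →
            restrictedTranslate x (restrictedTranslate y ξ) = restrictedTranslate (x * y) ξ) ∧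
        (star x * x ≠ y * star y →
          ∀ ξ : S → ℂ, Memℓp ξ 2 →
            restrictedTranslate x (restrictedTranslate y ξ) = 0)) := by
  refine ⟨fun x ξ hξ => ?_, fun x ξ η _ _ => restrictedTranslate.tsum_mul_conj x ξ η,
    fun x y => ⟨fun h ξ _ => restrictedTranslate.comp_of_eq h ξ,
      fun h ξ _ => restrictedTranslate.comp_of_ne h ξ⟩⟩
  rw [memℓp_two_iff_summable_norm_sq] at hξ ⊢
  exact ⟨restrictedTranslate.summable_norm_sq hξ,
    Real.sqrt_le_sqrt (restrictedTranslate.tsum_norm_sq_le hξ)⟩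
end
end
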